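/- arXiv:1311.4248 — 3 statements merged into one kernel-verified Lean document; each statement's English description precedes it below -/
import Mathlib

section
/- Let ω be a symplectic form on a finite-dimensional real Lie algebra 𝔤 and let J be an almost complex structure on 𝔤 compatible with ω, with associated metric g(X,Y) = ω(X,JY). If for some k ≥ 1 the term C^k𝔤 of the descending central series is J-invariant, then every vector X ∈ 𝒵 ∩ C^k𝔤 is isotropic for g, i.e. g(X,X) = 0. In particular, if 𝒵 ∩ C^k𝔤 ≠ 0, the associated metric g is neither positive nor negative definite (it is a proper pseudo-Riemannian metric). -/
/-- If for some k ≥ 1 the term C^k𝔤 of the descending central series is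
J-invariant, then every vector in 𝒵 ∩ C^k𝔤 is isotropic for the associated metric
g(X,Y) = ω(X,JY); in particular, if 𝒵 ∩ C^k𝔤 ≠ 0, the metric g is neither positive nor negative
definite. -/
theorem central_lcs_vectors_isotropic
    (L : Type) [LieRing L] [LieAlgebra ℝ L] [FiniteDimensional ℝ L]
    (ω : LinearMap.BilinForm ℝ L)
    (halt : ∀ X : L, ω X X = 0)
    (hnondeg : ∀ X : L, (∀ Y : L, ω X Y = 0) → X = 0)
    (hclosed : ∀ X Y Z : L, ω ⁅X, Y⁆ Z - ω ⁅X, Z⁆ Y + ω ⁅Y, Z⁆ X = 0)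
    (J : L →ₗ[ℝ] L)
    (hJ2 : ∀ X : L, J (J X) = -X)
    (hcompat : ∀ X Y : L, ω (J X) (J Y) = ω X Y)
    (g : L → L → ℝ) (hg : ∀ X Y : L, g X Y = ω X (J Y))
    (k : ℕ) (hk : 1 ≤ k)
    (hJinv : ∀ x ∈ LieModule.lowerCentralSeries ℝ L L k,
      J x ∈ LieModule.lowerCentralSeries ℝ L L k) :
    (∀ X : L, X ∈ LieAlgebra.center ℝ L → X ∈ LieModule.lowerCentralSeries ℝ L L k →
      g X X = 0) ∧
    ((∃ X : L, X ∈ LieAlgebra.center ℝ L ∧ X ∈ LieModule.lowerCentralSeries ℝ L L k ∧ X ≠ 0) →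
      ¬ (∀ X : L, X ≠ 0 → 0 < g X X) ∧ ¬ (∀ X : L, X ≠ 0 → g X X < 0)) := by
  have main : ∀ X : L, X ∈ LieAlgebra.center ℝ L →
      X ∈ LieModule.lowerCentralSeries ℝ L L k → g X X = 0 := by
    intro X hX hXk
    rw [hg]
    have hc : ∀ A : L, ⁅A, X⁆ = 0 := fun A => (LieModule.mem_maxTrivSubmodule ℝ L L X).1 hX A
    have h1 : J X ∈ LieModule.lowerCentralSeries ℝ L L 1 :=
      LieModule.antitone_lowerCentralSeries ℝ L L hk (hJinv X hXk)
    rw [LieModule.lowerCentralSeries_succ, ← LieSubmodule.mem_toSubmodule,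
      LieSubmodule.lieIdeal_oper_eq_linear_span'] at h1
    have h2 : ω (J X) X = 0 := by
      generalize J X = W at h1
      induction h1 using Submodule.span_induction with
      | mem x hx =>
        obtain ⟨A, _, B, _, rfl⟩ := hx
        have := hclosed A B X
        simpa [hc] using this
      | zero => simp
      | add x y _ _ hx hy => simp [hx, hy]
      | smul a x _ hx => simp [hx]
    have h3 := halt (X + J X)
    simp only [map_add, LinearMap.add_apply, halt, h2] at h3
    linarith
  refine ⟨main, ?_⟩
  rintro ⟨X, hX, hXk, h0⟩
  have h := main X hX hXk
  exact ⟨fun H => (H X h0).ne' h, fun H => (H X h0).ne h⟩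
end

section
/- Let ω be a symplectic form on a finite-dimensional real Lie algebra 𝔤 and let J be an almost complex structure on 𝔤 compatible with ω. If 𝔟 is a J-invariant ideal of 𝔤 contained in the center 𝒵, then ω(C¹𝔤 + J(C¹𝔤), 𝔟) = 0; that is, ω(U, W) = 0 whenever U lies in the subspace spanned by [𝔤,𝔤] and J([𝔤,𝔤]) and W ∈ 𝔟. -/
/-- If 𝔟 is a J-invariant ideal contained in the center 𝒵, then
ω(C¹𝔤 + J(C¹𝔤), 𝔟) = 0. -/
theorem omega_derived_plus_J_derived_orthogonal_central_ideal
    (L : Type) [LieRing L] [LieAlgebra ℝ L] [FiniteDimensional ℝ L]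
    (ω : LinearMap.BilinForm ℝ L)
    (halt : ∀ X : L, ω X X = 0)
    (hnondeg : ∀ X : L, (∀ Y : L, ω X Y = 0) → X = 0)
    (hclosed : ∀ X Y Z : L, ω ⁅X, Y⁆ Z - ω ⁅X, Z⁆ Y + ω ⁅Y, Z⁆ X = 0)
    (J : L →ₗ[ℝ] L)
    (hJ2 : ∀ X : L, J (J X) = -X)
    (hcompat : ∀ X Y : L, ω (J X) (J Y) = ω X Y)
    (b : LieIdeal ℝ L)
    (hbJ : ∀ x ∈ b, J x ∈ b)
    (hbZ : b ≤ LieAlgebra.center ℝ L) :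
    ∀ U ∈ (LieModule.lowerCentralSeries ℝ L L 1).toSubmodule ⊔
        Submodule.map J (LieModule.lowerCentralSeries ℝ L L 1).toSubmodule,
      ∀ W ∈ b, ω U W = 0 := by
  have key : ∀ U ∈ (LieModule.lowerCentralSeries ℝ L L 1).toSubmodule, ∀ W ∈ b, ω U W = 0 := by
    intro U hU W hW
    have hc : ∀ x : L, ⁅x, W⁆ = 0 := (LieModule.mem_maxTrivSubmodule ℝ L L W).1 (hbZ hW)
    rw [LieModule.lowerCentralSeries_succ, LieSubmodule.lieIdeal_oper_eq_linear_span'] at hU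
    induction hU using Submodule.span_induction with
    | mem x hx =>
      obtain ⟨X, _, Y, _, rfl⟩ := hx
      have h := hclosed X Y W
      rw [hc X, hc Y] at h
      simpa using h
    | zero => simp
    | add x y _ _ hx hy => simp [hx, hy]
    | smul a x _ hx => simp [hx]
  intro U hU W hW
  obtain ⟨u, hu, v, hv, rfl⟩ := Submodule.mem_sup.1 hU
  obtain ⟨v, hv', rfl⟩ := hv
  have h1 : ω (J v) W = 0 := by
    have h := hcompat (J v) W
    rw [hJ2, map_neg, LinearMap.neg_apply, key v hv' _ (hbJ W hW)] at h
    simpa using h.symm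
  rw [map_add, LinearMap.add_apply, key u hu W hW, h1, add_zero]
end

section
/- Let ω be a symplectic form on a finite-dimensional real Lie algebra 𝔤 and let J be an almost complex structure on 𝔤 compatible with ω, with associated metric g(X,Y) = ω(X,JY). If 𝔟 is a J-invariant ideal of 𝔤 contained in the center 𝒵, then 𝔟 is g-orthogonal to the subspace C¹𝔤 + J(C¹𝔤): g(C¹𝔤 + J(C¹𝔤), 𝔟) = 0. -/
/-- If 𝔟 is a J-invariant ideal contained in the center 𝒵, then 𝔟 is
orthogonal to the subspace C¹𝔤 + J(C¹𝔤) with respect to the associated metric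
g(X,Y) = ω(X,JY). -/
theorem assoc_metric_derived_plus_J_derived_orthogonal_central_ideal
    (L : Type) [LieRing L] [LieAlgebra ℝ L] [FiniteDimensional ℝ L]
    (ω : LinearMap.BilinForm ℝ L)
    (halt : ∀ X : L, ω X X = 0)
    (hnondeg : ∀ X : L, (∀ Y : L, ω X Y = 0) → X = 0)
    (hclosed : ∀ X Y Z : L, ω ⁅X, Y⁆ Z - ω ⁅X, Z⁆ Y + ω ⁅Y, Z⁆ X = 0)
    (J : L →ₗ[ℝ] L)
    (hJ2 : ∀ X : L, J (J X) = -X)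
    (hcompat : ∀ X Y : L, ω (J X) (J Y) = ω X Y)
    (g : L → L → ℝ) (hg : ∀ X Y : L, g X Y = ω X (J Y))
    (b : LieIdeal ℝ L)
    (hbJ : ∀ x ∈ b, J x ∈ b)
    (hbZ : b ≤ LieAlgebra.center ℝ L) :
    ∀ U ∈ (LieModule.lowerCentralSeries ℝ L L 1).toSubmodule ⊔
        Submodule.map J (LieModule.lowerCentralSeries ℝ L L 1).toSubmodule,
      ∀ W ∈ b, g U W = 0 := by
  have hz : ∀ W ∈ b, ∀ X : L, ⁅X, W⁆ = 0 := fun W hW X =>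
    (LieModule.mem_maxTrivSubmodule (R := ℝ) (L := L) (M := L) W).1 (hbZ hW) X
  have key : ∀ A ∈ (LieModule.lowerCentralSeries ℝ L L 1).toSubmodule,
      ∀ W ∈ b, ω A W = 0 := by
    intro A hA W hW
    rw [LieModule.lowerCentralSeries_succ, LieModule.lowerCentralSeries_zero,
      LieSubmodule.lieIdeal_oper_eq_linear_span'] at hA
    induction hA using Submodule.span_induction with
    | mem x hx =>
      obtain ⟨X, -, Y, -, rfl⟩ := hx
      have h := hclosed X Y W
      rw [hz W hW X, hz W hW Y] at h
      simpa using h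
    | zero => simp
    | add x y _ _ hx hy => simp [hx, hy]
    | smul c x _ hx => simp [hx]
  intro U hU W hW
  obtain ⟨A, hA, B, hB, rfl⟩ := Submodule.mem_sup.1 hU
  obtain ⟨C, hC, rfl⟩ := Submodule.mem_map.1 hB
  rw [hg, map_add, LinearMap.add_apply, hcompat, key A hA _ (hbJ W hW), key C hC W hW, add_zero]
end
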